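/- arXiv:1509.00820 — 2 statements merged into one kernel-verified Lean document; each statement's English description precedes it below -/
import Mathlib

section
/- Let f : ℝ → ℝ be a polynomial function. Define u(t,ξ) = ∑_{n=0}^∞ (tⁿ/n!) f^{(2n)}(ξ), where f^{(2n)} denotes the 2n-th derivative of f (the sum is finite since f is a polynomial). Then u satisfies the one-dimensional heat equation ∂u/∂t = ∂²u/∂ξ² for all t, ξ ∈ ℝ, with initial condition u(0,ξ) = f(ξ). -/
theorem heat_aux_iter (p : Polynomial ℝ) (n : ℕ) :
    deriv^[n] (fun x : ℝ => p.eval x) = fun x => (Polynomial.derivative^[n] p).eval x := by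
  induction n with
  | zero => rfl
  | succ k ih =>
    rw [Function.iterate_succ_apply', ih, Function.iterate_succ_apply']
    funext x
    exact Polynomial.deriv _

/-- **Operator-exponential solution of the heat equation for polynomial data.**
For a polynomial `f`, the (finite) series `u(t,ξ) = ∑_{n≥0} (tⁿ/n!) f^{(2n)}(ξ)` solves the
one-dimensional heat equation `∂_t u = ∂²_ξ u` with initial condition `u(0,·) = f`. -/
theorem heat_equation_polynomial_solution
    (p : Polynomial ℝ) (f : ℝ → ℝ) (hf : ∀ x : ℝ, f x = p.eval x)
    (u : ℝ → ℝ → ℝ)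
    (hu : ∀ t ξ : ℝ, u t ξ = ∑' n : ℕ, (t ^ n / (n.factorial : ℝ)) * (deriv^[2 * n] f) ξ) :
    (∀ t ξ : ℝ, deriv (fun s => u s ξ) t = deriv (deriv (u t)) ξ) ∧
      (∀ ξ : ℝ, u 0 ξ = f ξ) := by
  obtain rfl : f = fun x => p.eval x := funext hf
  have hz : ∀ n, p.natDegree + 1 ≤ n → Polynomial.derivative^[2 * n] p = 0 := fun n hn =>
    Polynomial.iterate_derivative_eq_zero (by omega)
  have key : ∀ t ξ : ℝ, u t ξ = ∑ n ∈ Finset.range (p.natDegree + 1 + 1),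
      (t ^ n / (n.factorial : ℝ)) * (Polynomial.derivative^[2 * n] p).eval ξ := by
    intro t ξ
    rw [hu, tsum_eq_sum (s := Finset.range (p.natDegree + 1 + 1))]
    · simp only [heat_aux_iter]
    · intro n hn
      rw [Finset.mem_range] at hn
      rw [heat_aux_iter, hz n (by omega)]
      simp
  refine ⟨fun t ξ => ?_, fun ξ => ?_⟩
  · have h1 : HasDerivAt (fun s => u s ξ) (∑ n ∈ Finset.range (p.natDegree + 1 + 1),
        ((n * t ^ (n - 1)) / (n.factorial : ℝ)) * (Polynomial.derivative^[2 * n] p).eval ξ) t := by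
      simp only [key]
      exact HasDerivAt.fun_sum fun n _ => ((hasDerivAt_pow n t).div_const _).mul_const _
    have h2 : u t = fun ξ => (∑ n ∈ Finset.range (p.natDegree + 1 + 1),
        Polynomial.C (t ^ n / (n.factorial : ℝ)) * Polynomial.derivative^[2 * n] p).eval ξ := by
      funext x
      simp only [key, Polynomial.eval_finsetSum, Polynomial.eval_C_mul]
    have h3 := congrFun (heat_aux_iter (∑ n ∈ Finset.range (p.natDegree + 1 + 1),
        Polynomial.C (t ^ n / (n.factorial : ℝ)) * Polynomial.derivative^[2 * n] p) 2) ξ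
    rw [← h2] at h3
    change deriv (deriv (u t)) ξ = _ at h3
    rw [h1.deriv, h3, Polynomial.iterate_derivative_sum, Polynomial.eval_finsetSum,
      Finset.sum_range_succ', Finset.sum_range_succ (n := p.natDegree + 1)]
    simp only [Polynomial.iterate_derivative_C_mul, Polynomial.eval_C_mul]
    rw [hz _ le_rfl]
    simp only [Polynomial.iterate_derivative_zero, Polynomial.eval_zero, mul_zero, add_zero,
      Nat.cast_zero, zero_mul, zero_div]
    refine Finset.sum_congr rfl fun n _ => ?_
    rw [← Function.iterate_add_apply, show 2 + 2 * n = 2 * (n + 1) by ring, Nat.factorial_succ]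
    have : (n.factorial : ℝ) ≠ 0 := by positivity
    have : (n + 1 : ℝ) ≠ 0 := by positivity
    congr 1
    push_cast
    field_simp
  · rw [key, Finset.sum_range_succ']
    simp
end

section
/- Let T₀ : ℝ → ℝ be a polynomial function of the radial variable ξ. Define T(t,ξ) = t + (1/ξ) ∑_{n=0}^∞ (tⁿ/n!) d^{2n}/dξ^{2n} [ξ T₀(ξ)] for ξ > 0 (the sum is finite since ξ T₀(ξ) is a polynomial). Then T satisfies the radially symmetric heat equation with unit source ∂T/∂t = ∂²T/∂ξ² + (2/ξ) ∂T/∂ξ + 1 for all t ∈ ℝ and all ξ > 0, with initial condition T(0,ξ) = T₀(ξ). -/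
theorem aux_iter (q : Polynomial ℝ) (k : ℕ) :
    deriv^[k] (fun x : ℝ => q.eval x) = fun x => (Polynomial.derivative^[k] q).eval x := by
  induction k with
  | zero => rfl
  | succ k ih =>
    rw [Function.iterate_succ_apply', ih, Function.iterate_succ_apply']
    funext x
    exact Polynomial.deriv _

theorem aux_zero (q : Polynomial ℝ) (k : ℕ) (hk : q.natDegree < k) :
    Polynomial.derivative^[k] q = 0 :=
  Polynomial.iterate_derivative_eq_zero hk

theorem aux_space (t : ℝ) (g : Polynomial ℝ) (S : ℝ → ℝ)
    (hS : ∀ x, S x = t + (1 / x) * g.eval x) (x : ℝ) (hx : 0 < x) :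
    deriv (deriv S) x + (2 / x) * deriv S x = (1 / x) * g.derivative.derivative.eval x := by
  have h1 : ∀ y : ℝ, 0 < y → deriv S y = (g.derivative.eval y * y - g.eval y) / y ^ 2 := by
    intro y hy
    have : S = fun x => t + g.eval x / x := by
      funext z; rw [hS]; ring
    rw [this]
    have h := ((g.hasDerivAt y).div (hasDerivAt_id y) hy.ne').const_add t
    simpa using h.deriv
  have h2 : deriv S =ᶠ[nhds x] fun y => (g.derivative.eval y * y - g.eval y) / y ^ 2 := by
    filter_upwards [lt_mem_nhds hx] with y hy using h1 y hy
  rw [h2.deriv_eq, h1 x hx]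
  have h3 := (((g.derivative.hasDerivAt x).mul (hasDerivAt_id x)).sub (g.hasDerivAt x)).div
    (hasDerivAt_pow 2 x) (pow_ne_zero 2 hx.ne')
  have h4 : deriv (fun y => (g.derivative.eval y * y - g.eval y) / y ^ 2) x = _ := h3.deriv
  rw [h4]
  have := hx.ne'
  simp
  field_simp
  ring

theorem aux_time (a : ℕ → ℝ) (N : ℕ) (hN : a N = 0) (t : ℝ) :
    HasDerivAt (fun s : ℝ => ∑ n ∈ Finset.range N, s ^ n / (n.factorial : ℝ) * a n)
      (∑ n ∈ Finset.range N, t ^ n / (n.factorial : ℝ) * a (n + 1)) t := by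
  have h0 : (fun s : ℝ => ∑ n ∈ Finset.range N, s ^ n / (n.factorial : ℝ) * a n) =
      fun s : ℝ => ∑ n ∈ Finset.range (N + 1), s ^ n / (n.factorial : ℝ) * a n := by
    funext s
    rw [Finset.sum_range_succ, hN]; simp
  rw [h0]
  have h := HasDerivAt.fun_sum (u := Finset.range (N + 1)) (x := t)
    (A := fun n s => s ^ n / (n.factorial : ℝ) * a n)
    (A' := fun n => (n * t ^ (n - 1)) / (n.factorial : ℝ) * a n)
    (fun n _ => ((hasDerivAt_pow n t).div_const _).mul_const _)
  refine h.congr_deriv ?_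
  symm
  rw [Finset.sum_range_succ']
  simp only [Nat.cast_zero, zero_mul, zero_div, add_zero]
  refine Finset.sum_congr rfl fun n _ => ?_
  rw [Nat.factorial_succ]
  have h1 : (n.factorial : ℝ) ≠ 0 := by positivity
  have h2 : ((n : ℝ) + 1) ≠ 0 := by positivity
  push_cast
  field_simp

/-- **Series solution of the radially symmetric heat equation with unit source.**
For a polynomial initial temperature `T₀(ξ)`, the function
`T(t,ξ) = t + (1/ξ) ∑_{n≥0} (tⁿ/n!) (d²/dξ²)ⁿ [ξ T₀(ξ)]` satisfies
`∂_t T = ∂²_ξ T + (2/ξ) ∂_ξ T + 1` for all `t` and all `ξ > 0`, with `T(0,ξ) = T₀(ξ)`. -/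
theorem radial_heat_source_series_solution
    (p : Polynomial ℝ) (T₀ : ℝ → ℝ) (hT₀ : ∀ x : ℝ, T₀ x = p.eval x)
    (T : ℝ → ℝ → ℝ)
    (hT : ∀ t ξ : ℝ, T t ξ =
      t + (1 / ξ) * ∑' n : ℕ,
        (t ^ n / (n.factorial : ℝ)) * (deriv^[2 * n] (fun x : ℝ => x * T₀ x)) ξ) :
    (∀ t : ℝ, ∀ ξ : ℝ, 0 < ξ →
      deriv (fun s => T s ξ) t =
        deriv (deriv (T t)) ξ + (2 / ξ) * deriv (T t) ξ + 1) ∧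
      (∀ ξ : ℝ, 0 < ξ → T 0 ξ = T₀ ξ) := by
  obtain ⟨q, hq⟩ : ∃ q : Polynomial ℝ, q = Polynomial.X * p := ⟨_, rfl⟩
  have hf : (fun x : ℝ => x * T₀ x) = fun x => q.eval x := by
    funext x; simp [hq, hT₀]
  obtain ⟨N, hNdef⟩ : ∃ N : ℕ, N = q.natDegree + 1 := ⟨_, rfl⟩
  have hz : ∀ n, N ≤ n → Polynomial.derivative^[2 * n] q = 0 := fun n hn =>
    aux_zero q _ (by omega)
  have hT' : ∀ t ξ : ℝ, T t ξ = t + (1 / ξ) * ∑ n ∈ Finset.range N,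
      t ^ n / (n.factorial : ℝ) * (Polynomial.derivative^[2 * n] q).eval ξ := by
    intro t ξ
    rw [hT, hf, tsum_eq_sum (s := Finset.range N)]
    · simp only [aux_iter]
    · intro n hn
      rw [aux_iter, hz n (by simpa using hn)]
      simp
  refine ⟨fun t ξ hξ => ?_, fun ξ hξ => ?_⟩
  · have hs := aux_space t (∑ n ∈ Finset.range N,
      Polynomial.C (t ^ n / (n.factorial : ℝ)) * Polynomial.derivative^[2 * n] q) (T t)
      (fun x => by rw [hT']; simp [Polynomial.eval_finsetSum]) ξ hξ
    rw [hs]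
    have ht := (hasDerivAt_id t).add ((aux_time
      (fun n => (Polynomial.derivative^[2 * n] q).eval ξ) N (by simp [hz N le_rfl]) t).const_mul
      (1 / ξ))
    have he : (fun s => T s ξ) = _ := funext fun s => hT' s ξ
    rw [he]
    refine ht.deriv.trans ?_
    rw [add_comm]
    congr 2
    simp only [Polynomial.derivative_sum, Polynomial.derivative_C_mul, Polynomial.eval_finsetSum,
      Polynomial.eval_mul, Polynomial.eval_C]
    refine Finset.sum_congr rfl fun n _ => ?_
    rw [show 2 * (n + 1) = 2 * n + 1 + 1 by ring, Function.iterate_succ_apply',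
      Function.iterate_succ_apply']
  · rw [hT', hNdef, Finset.sum_range_succ']
    have := hξ.ne'
    simp [hq, hT₀]
    field_simp
end
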